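/- Let κ ≥ 0 and define σ(η,κ) := −ln(√ρ₊(η,κ) + √(ρ₊(η,κ) − 1)) for η ≥ −κ² and σ(η,κ) := +ln(√ρ₋(η,κ) + √(ρ₋(η,κ) − 1)) for η ≤ −κ² (consistently σ(−κ²,κ) = 0). Then for each fixed κ ≥ 0 the map η ↦ σ(η,κ) is a strictly decreasing bijection from ℝ onto ℝ, and it satisfies the pointwise bound |σ(η,κ)| ≤ ln(1 + 2√|η| + 2κ) for all η ∈ ℝ. -/

import Mathlib

/-!
Put `s = ln(√ρ + √(ρ − 1))`, i.e. `ρ = cosh² s` with `s ≥ 0`. Then `G(ρ) = sinh(2s)/2 + s` and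
`P_±(ρ) = e^{±2s}` (`Gf_Pp_Pm_eq`). With `σ = −s` on the `ρ₊` branch and `σ = s` on the `ρ₋`
branch, both implicit equations become the single equation `F(σ(η)) = η`, where
`F(t) = −(sinh(2t)/2 + t + κ² e^{2t})` is strictly decreasing on `ℝ`. Hence `σ` is a two-sided
inverse of `F`, which gives monotonicity and bijectivity.

For the bound, let `x = e^{|σ|} ≥ 1`. The equation `F(σ) = η` gives
`|η| + κ² ≥ sinh(2|σ|)/2 = (x² − x⁻²)/4 ≥ (x − 1)²/4`, and `|η| + κ² ≤ (√|η| + κ)²`.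
-/

noncomputable section

/-- `G(y) = √(y(y−1)) + ln(√y + √(y−1))`. -/
def Gf (y : ℝ) : ℝ := Real.sqrt (y * (y - 1)) + Real.log (Real.sqrt y + Real.sqrt (y - 1))

/-- `P₊(y) = 2y − 1 + 2√(y(y−1))`. -/
def Pp (y : ℝ) : ℝ := 2 * y - 1 + 2 * Real.sqrt (y * (y - 1))

/-- `P₋(y) = 2y − 1 − 2√(y(y−1))`. -/
def Pm (y : ℝ) : ℝ := 2 * y - 1 - 2 * Real.sqrt (y * (y - 1))

/-- The inverse of `η ↦ σ(η, κ)`. -/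
def sigmaInv (κ t : ℝ) : ℝ := -(Real.sinh (2 * t) / 2 + t + κ ^ 2 * Real.exp (2 * t))

lemma sigmaInv_strictAnti (κ : ℝ) : StrictAnti (sigmaInv κ) := by
  intro a b hab
  have h1 : Real.sinh (2 * a) < Real.sinh (2 * b) := Real.sinh_lt_sinh.2 (by linarith)
  have h2 : Real.exp (2 * a) ≤ Real.exp (2 * b) := Real.exp_le_exp.2 (by linarith)
  have h3 := mul_le_mul_of_nonneg_left h2 (sq_nonneg κ)
  unfold sigmaInv
  linarith

/-- The substitution `ρ = cosh² s`. -/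
lemma Gf_Pp_Pm_eq {ρ s : ℝ} (hρ : 1 ≤ ρ)
    (hs : s = Real.log (Real.sqrt ρ + Real.sqrt (ρ - 1))) :
    0 ≤ s ∧ Gf ρ = Real.sinh (2 * s) / 2 + s ∧ Pp ρ = Real.exp (2 * s) ∧
      Pm ρ = Real.exp (-(2 * s)) := by
  have ha : 1 ≤ Real.sqrt ρ := Real.one_le_sqrt.2 hρ
  have hb : 0 ≤ Real.sqrt (ρ - 1) := Real.sqrt_nonneg _
  have ha2 : Real.sqrt ρ ^ 2 = ρ := Real.sq_sqrt (by linarith)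
  have hb2 : Real.sqrt (ρ - 1) ^ 2 = ρ - 1 := Real.sq_sqrt (by linarith)
  have hab : Real.sqrt (ρ * (ρ - 1)) = Real.sqrt ρ * Real.sqrt (ρ - 1) :=
    Real.sqrt_mul (by linarith) _
  unfold Gf Pp Pm
  rw [← hs, hab]
  set a := Real.sqrt ρ
  set b := Real.sqrt (ρ - 1)
  have he : Real.exp s = a + b := by rw [hs, Real.exp_log (by linarith)]
  -- `a² − b² = 1`, so `a − b` is the reciprocal of `a + b`.
  have hen : Real.exp (-s) = a - b := by
    rw [Real.exp_neg, he]
    exact inv_eq_of_mul_eq_one_right (by nlinarith)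
  have hp : Real.exp (2 * s) = (a + b) ^ 2 := by
    rw [← he, ← Real.exp_nat_mul]; norm_num
  have hm : Real.exp (-(2 * s)) = (a - b) ^ 2 := by
    rw [← hen, ← Real.exp_nat_mul]; congr 1; push_cast; ring
  refine ⟨?_, ?_, ?_, ?_⟩
  · rw [hs]; exact Real.log_nonneg (by linarith)
  · rw [Real.sinh_eq, hp, hm]; ring
  · rw [hp]; nlinarith
  · rw [hm]; nlinarith

/-- In terms of `x = e^s`, this is `(x − 1)² ≤ x² − x⁻²` for `x ≥ 1`. -/
lemma sq_exp_sub_one_le {s : ℝ} (hs : 0 ≤ s) :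
    (Real.exp s - 1) ^ 2 / 4 ≤ Real.sinh (2 * s) / 2 := by
  have h1 : 1 ≤ Real.exp s := Real.one_le_exp hs
  have h2 : Real.exp (-(2 * s)) ≤ 1 := Real.exp_le_one_iff.2 (by linarith)
  have hp : Real.exp (2 * s) = Real.exp s ^ 2 := by
    rw [← Real.exp_nat_mul]; norm_num
  rw [Real.sinh_eq, hp]
  nlinarith

lemma sq_exp_abs_sub_one_le (κ t : ℝ) :
    (Real.exp |t| - 1) ^ 2 / 4 ≤ |sigmaInv κ t| + κ ^ 2 := by
  refine (sq_exp_sub_one_le (abs_nonneg t)).trans ?_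
  have hκ2 := sq_nonneg κ
  rcases le_total 0 t with ht | ht
  · have h := neg_le_abs (sigmaInv κ t)
    have h3 := mul_nonneg hκ2 (Real.exp_pos (2 * t)).le
    rw [abs_of_nonneg ht]
    unfold sigmaInv at *
    linarith
  · have h := le_abs_self (sigmaInv κ t)
    have h2 : Real.exp (2 * t) ≤ 1 := Real.exp_le_one_iff.2 (by linarith)
    have h3 := mul_le_mul_of_nonneg_left h2 hκ2
    rw [abs_of_nonpos ht, mul_neg, Real.sinh_neg]
    unfold sigmaInv at *
    linarith

/-- Let `ρ₊(η)` (for `η ≥ −κ²`) and `ρ₋(η)` (for `η ≤ −κ²`) be the solutions in `[1,∞)` of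
`η − G(ρ) + κ²P₋(ρ) = 0` resp. `η + G(ρ) + κ²P₊(ρ) = 0`, and define
`σ(η) = −ln(√ρ₊ + √(ρ₊ − 1))` for `η ≥ −κ²` and `σ(η) = ln(√ρ₋ + √(ρ₋ − 1))` for
`η ≤ −κ²`.  Then `σ` is a strictly decreasing bijection of `ℝ` onto `ℝ` and
`|σ(η)| ≤ ln(1 + 2√|η| + 2κ)` for all `η`. -/
theorem sigma_bijection_and_bound (κ : ℝ) (hκ : 0 ≤ κ) (ρp ρm σ : ℝ → ℝ)
    (hρp : ∀ η, -κ ^ 2 ≤ η → 1 ≤ ρp η ∧ η - Gf (ρp η) + κ ^ 2 * Pm (ρp η) = 0)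
    (hρm : ∀ η, η ≤ -κ ^ 2 → 1 ≤ ρm η ∧ η + Gf (ρm η) + κ ^ 2 * Pp (ρm η) = 0)
    (hσp : ∀ η, -κ ^ 2 ≤ η →
      σ η = -Real.log (Real.sqrt (ρp η) + Real.sqrt (ρp η - 1)))
    (hσm : ∀ η, η ≤ -κ ^ 2 →
      σ η = Real.log (Real.sqrt (ρm η) + Real.sqrt (ρm η - 1))) :
    StrictAnti σ ∧ Function.Bijective σ ∧
      ∀ η, |σ η| ≤ Real.log (1 + 2 * Real.sqrt |η| + 2 * κ) := by
  have hF : ∀ η, sigmaInv κ (σ η) = η := by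
    intro η
    rcases le_total (-κ ^ 2) η with h | h
    · obtain ⟨h1, h2⟩ := hρp η h
      obtain ⟨-, hG, -, hP⟩ := Gf_Pp_Pm_eq h1 rfl
      rw [hG, hP] at h2
      rw [hσp η h]
      unfold sigmaInv
      rw [mul_neg, Real.sinh_neg]
      linarith
    · obtain ⟨h1, h2⟩ := hρm η h
      obtain ⟨-, hG, hP, -⟩ := Gf_Pp_Pm_eq h1 rfl
      rw [hG, hP] at h2
      rw [hσm η h]
      unfold sigmaInv
      linarith
  have hanti := sigmaInv_strictAnti κ
  refine ⟨?_, ⟨Function.LeftInverse.injective hF, ?_⟩, ?_⟩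
  · intro a b hab
    rw [← hanti.lt_iff_gt, hF, hF]
    exact hab
  · intro t
    exact ⟨sigmaInv κ t, hanti.injective (hF _)⟩
  · intro η
    have hb := sq_exp_abs_sub_one_le κ (σ η)
    rw [hF] at hb
    have hr := Real.sqrt_nonneg |η|
    have hr2 : Real.sqrt |η| ^ 2 = |η| := Real.sq_sqrt (abs_nonneg η)
    rw [Real.le_log_iff_exp_le (by positivity)]
    have hx : Real.exp |σ η| - 1 ≤ 2 * (Real.sqrt |η| + κ) := by
      refine le_of_abs_le (abs_le_of_sq_le_sq ?_ (by positivity))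
      nlinarith [mul_nonneg hr hκ]
    linarith
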